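/- arXiv:2502.10335 — 2 statements merged into one kernel-verified Lean document; each statement's English description precedes it below -/
import Mathlib

section
/- For every complex number s with real part greater than 1, the Dirichlet series over squarefree positive integers satisfies ∑_{n squarefree} n^{-s} = ζ(s)/ζ(2s), where ζ denotes the Riemann zeta function. -/
/-!
Every positive integer is uniquely `a * b ^ 2` with `a` squarefree and `b` positive. Since
`(a * b ^ 2) ^ (-s) = a ^ (-s) * b ^ (-(2 * s))`, absolute convergence for `1 < re s` allows
rearranging `ζ(s)` as the product of the squarefree series and `ζ(2s)`; the latter does not vanish.
-/

/-- Cancelling `gcd b d` reduces this to the coprime case, where `d ^ 2 ∣ a` forces `d = 1`. -/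
lemma dvd_of_sq_dvd_squarefree_mul_sq {a b d : ℕ} (ha : Squarefree a) (hb : 0 < b)
    (h : d ^ 2 ∣ a * b ^ 2) : d ∣ b := by
  obtain ⟨g, b', d', hg, hco, rfl, rfl⟩ := Nat.exists_coprime' (Nat.gcd_pos_of_pos_left d hb)
  have h1 : d' ^ 2 ∣ a * b' ^ 2 := by
    rw [mul_pow, mul_pow, ← mul_assoc] at h
    exact Nat.dvd_of_mul_dvd_mul_right (pow_pos hg 2) h
  have h2 : d' ^ 2 ∣ a := (Nat.Coprime.pow 2 2 hco.symm).dvd_of_dvd_mul_right h1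
  have h3 : d' = 1 := Nat.isUnit_iff.mp (ha d' (by rwa [← sq]))
  simp [h3]

/-- The map `(a, b) ↦ a * b ^ 2`. -/
def squarefreeMulSq (p : {n : ℕ // Squarefree n} × ℕ+) : ℕ+ :=
  ⟨p.1 * (p.2 : ℕ) ^ 2, Nat.mul_pos (Nat.pos_of_ne_zero p.1.2.ne_zero) (pow_pos p.2.pos 2)⟩

lemma squarefreeMulSq_bijective : Function.Bijective squarefreeMulSq := by
  constructor
  · rintro ⟨⟨a, ha⟩, b⟩ ⟨⟨c, hc⟩, d⟩ h
    have h' : a * (b : ℕ) ^ 2 = c * (d : ℕ) ^ 2 := congrArg PNat.val h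
    have hbd : (b : ℕ) = d := Nat.dvd_antisymm
      (dvd_of_sq_dvd_squarefree_mul_sq hc d.pos ⟨a, by rw [← h', mul_comm]⟩)
      (dvd_of_sq_dvd_squarefree_mul_sq ha b.pos ⟨c, by rw [h', mul_comm]⟩)
    rw [hbd] at h'
    have hac : a = c := Nat.eq_of_mul_eq_mul_right (pow_pos d.pos 2) h'
    obtain rfl : b = d := PNat.eq hbd
    subst hac
    rfl
  · intro n
    obtain ⟨a, b, -, hb, h, ha⟩ := Nat.sq_mul_squarefree_of_pos n.pos
    exact ⟨(⟨a, ha⟩, ⟨b, hb⟩), PNat.eq (by simpa [squarefreeMulSq, mul_comm] using h)⟩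

lemma summable_norm_cpow_neg {s : ℂ} (hs : 1 < s.re) :
    Summable fun n : ℕ => ‖(n : ℂ) ^ (-s)‖ := by
  have h := (Complex.summable_one_div_nat_cpow.mpr hs).norm
  simpa [Complex.cpow_neg] using h

lemma riemannZeta_eq_tsum_pnat {s : ℂ} (hs : 1 < s.re) :
    riemannZeta s = ∑' n : ℕ+, ((n : ℕ) : ℂ) ^ (-s) := by
  have h0 : s ≠ 0 := by rintro rfl; norm_num at hs
  rw [zeta_eq_tsum_one_div_nat_cpow hs,
    ← tsum_pnat_eq_tsum_of_eq_zero (f := fun n : ℕ => 1 / (n : ℂ) ^ s) (by simp [h0])]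
  simp [Complex.cpow_neg]

/-- For every complex number `s` with real part greater than 1, the Dirichlet series over
squarefree positive integers satisfies `∑_{n squarefree} n^{-s} = ζ(s)/ζ(2s)`. -/
theorem squarefree_dirichlet_series (s : ℂ) (hs : 1 < s.re) :
    ∑' n : {n : ℕ // Squarefree n}, ((n : ℕ) : ℂ) ^ (-s)
      = riemannZeta s / riemannZeta (2 * s) := by
  have hs2 : 1 < (2 * s).re := by simp; linarith
  rw [eq_div_iff (riemannZeta_ne_zero_of_one_lt_re hs2), riemannZeta_eq_tsum_pnat hs,
    riemannZeta_eq_tsum_pnat hs2,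
    tsum_mul_tsum_of_summable_norm ((summable_norm_cpow_neg hs).comp_injective
      Subtype.val_injective) ((summable_norm_cpow_neg hs2).comp_injective PNat.coe_injective),
    ← (Equiv.ofBijective _ squarefreeMulSq_bijective).tsum_eq]
  refine tsum_congr fun p => ?_
  simp only [Equiv.ofBijective_apply, squarefreeMulSq, PNat.mk_coe]
  rw [Nat.cast_mul, Complex.natCast_mul_natCast_cpow, Nat.cast_pow,
    ← Complex.natCast_cpow_natCast_mul]
  congr 2
  push_cast
  ring
end

section
/- Let {p₁, …, p_N} and {q₁, …, q_M} be two disjoint finite sets of primes. The natural density of the set of squarefree positive integers n that are divisible by every p_i and divisible by none of the q_j equals (∏_{i=1}^{N} 1/(p_i + 1)) · (∏_{j=1}^{M} q_j/(q_j + 1)) · (6/π²). -/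
/-!
Write `D(P, Q)` for the density of the set `A(P, Q)` of squarefree `n` divisible by all of `P` and
by none of `Q`.

The unconstrained case `D(∅, ∅) = 6 / π²` comes from the identity `∑_{d² ∣ n} μ(d) = 1` or `0`
according as `n` is squarefree or not (`sum_moebius_sq_dvd`). Summing over `n ≤ X`, the number of
squarefree integers up to `X` is `∑_d μ(d) ⌊X / d²⌋`; dividing by `X` and letting `X → ∞` by
dominated convergence gives `∑_d μ(d) / d² = 1 / ζ(2)` (`tendsto_squarefree_count`).

The constraints are then added one prime `p` at a time. Multiplication by `p` is a bijection from
the elements of `A(P, Q ∪ {p})` up to `X / p` onto the elements of `A(P ∪ {p}, Q)` up to `X`, and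
these two sets partition `A(P, Q)`. So if `f` counts `A(P, Q ∪ {p})`, then
`f(X) + f(⌊X / p⌋) ~ D(P, Q) X`. This relation determines the growth of `f`: the deviation
`e(X) = f(X) - c X` with `c = D(P, Q) p / (p + 1)` satisfies `e(X) + e(⌊X / p⌋) = o(X)`, and since
`1 / p ≤ 1 / 2` is a contraction factor, `e(X) = o(X)` (`tendsto_div_zero_of_add_comp_div`). Hence
`D(P, Q ∪ {p}) = D(P, Q) p / (p + 1)` and `D(P ∪ {p}, Q) = D(P, Q) / (p + 1)`.
-/

open Filter Topology

/-- For `k = 0` both sides are `0` by the convention on division by zero. -/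
lemma tendsto_natDiv_div (k : ℕ) :
    Tendsto (fun X : ℕ => ((X / k : ℕ) : ℝ) / X) atTop (𝓝 (1 / k)) := by
  have h := (tendsto_nat_floor_mul_div_atTop (R := ℝ) (a := 1 / (k : ℝ)) (by positivity)).comp
    tendsto_natCast_atTop_atTop
  refine h.congr fun X => ?_
  simp only [Function.comp]
  rw [one_div_mul_eq_div, Nat.floor_div_eq_div]

/-! ### The density of the squarefree integers -/

lemma sq_dvd_sq_mul_squarefree_iff {a b d : ℕ} (ha : Squarefree a) (hb : b ≠ 0) :
    d ^ 2 ∣ b ^ 2 * a ↔ d ∣ b := by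
  refine ⟨fun h => ?_, fun h => (pow_dvd_pow_of_dvd h 2).mul_right a⟩
  have ha0 : a ≠ 0 := ha.ne_zero
  have hn : b ^ 2 * a ≠ 0 := by positivity
  have hd : d ≠ 0 := by
    rintro rfl
    simp at h
    tauto
  rw [← Nat.factorization_le_iff_dvd hd hb]
  rw [← Nat.factorization_le_iff_dvd (by positivity) hn] at h
  intro p
  have h1 := h p
  have h2 := ha.natFactorization_le_one p
  rw [Nat.factorization_mul (by positivity) ha0] at h1
  simp only [Nat.factorization_pow, Finsupp.coe_add, Finsupp.coe_smul, Pi.add_apply,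
    Pi.smul_apply, smul_eq_mul] at h1
  omega

lemma sum_moebius_sq_dvd {n X : ℕ} (hn : 0 < n) (hX : n ≤ X) :
    ∑ d ∈ Finset.Icc 1 X with d ^ 2 ∣ n, ArithmeticFunction.moebius d
      = if Squarefree n then 1 else 0 := by
  obtain ⟨a, b, rfl, ha⟩ := Nat.sq_mul_squarefree n
  have hb : b ≠ 0 := by
    rintro rfl
    simp at hn
  -- With `n = b² a` and `a` squarefree, the `d` with `d² ∣ n` are exactly the divisors of `b`.
  have hset : (Finset.Icc 1 X).filter (fun d => d ^ 2 ∣ b ^ 2 * a) = b.divisors := by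
    ext d
    simp only [Finset.mem_filter, Finset.mem_Icc, Nat.mem_divisors,
      sq_dvd_sq_mul_squarefree_iff ha hb]
    refine ⟨fun h => ⟨h.2, hb⟩, fun h => ⟨⟨Nat.pos_of_dvd_of_pos h.1 (Nat.pos_of_ne_zero hb), ?_⟩,
      h.1⟩⟩
    have h1 := Nat.le_of_dvd (Nat.pos_of_ne_zero hb) h.1
    have h2 : b ≤ b ^ 2 * a := Nat.le_of_dvd hn ((dvd_pow_self b two_ne_zero).mul_right a)
    omega
  rw [hset, ← ArithmeticFunction.coe_mul_zeta_apply, ArithmeticFunction.moebius_mul_coe_zeta,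
    ArithmeticFunction.one_apply]
  have : Squarefree (b ^ 2 * a) ↔ b = 1 := by
    refine ⟨fun h => ?_, fun h => by simpa [h] using ha⟩
    exact Nat.isUnit_iff.mp (h b ⟨a, by ring⟩)
  simp only [this]

lemma squarefree_count_eq_tsum (X : ℕ) :
    (((Finset.Icc 1 X).filter Squarefree).card : ℝ)
      = ∑' d : ℕ, (ArithmeticFunction.moebius d : ℝ) * ((X / d ^ 2 : ℕ) : ℝ) := by
  rw [tsum_eq_sum (s := Finset.Icc 1 X)]
  · have h1 : (((Finset.Icc 1 X).filter Squarefree).card : ℤ)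
        = ∑ d ∈ Finset.Icc 1 X, ArithmeticFunction.moebius d * ((X / d ^ 2 : ℕ) : ℤ) := by
      rw [Finset.card_filter]
      simp only [Nat.cast_sum, Nat.cast_ite, Nat.cast_one, Nat.cast_zero]
      calc ∑ n ∈ Finset.Icc 1 X, (if Squarefree n then (1 : ℤ) else 0)
          = ∑ n ∈ Finset.Icc 1 X, ∑ d ∈ Finset.Icc 1 X,
              if d ^ 2 ∣ n then ArithmeticFunction.moebius d else 0 := by
            refine Finset.sum_congr rfl fun n hn => ?_
            rw [Finset.mem_Icc] at hn
            rw [← Finset.sum_filter, sum_moebius_sq_dvd hn.1 hn.2]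
        _ = _ := by
            rw [Finset.sum_comm]
            refine Finset.sum_congr rfl fun d _ => ?_
            rw [← Finset.sum_filter, Finset.sum_const, nsmul_eq_mul, mul_comm]
            have := Nat.Ioc_filter_dvd_card_eq_div X (d ^ 2)
            rw [← this]
            rfl
    simpa only [Int.cast_sum, Int.cast_mul, Int.cast_natCast] using
      congrArg (Int.cast : ℤ → ℝ) h1
  · intro d hd
    -- Outside `[1, X]`, either `d = 0` and `μ 0 = 0`, or `X < d ≤ d²` and the quotient is `0`.
    rw [Finset.mem_Icc] at hd
    rcases Nat.eq_zero_or_pos d with rfl | h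
    · simp
    · rw [Nat.div_eq_of_lt]
      · simp
      · have : d ≤ d ^ 2 := Nat.le_self_pow two_ne_zero d
        omega

lemma tsum_moebius_div_sq :
    ∑' d : ℕ, (ArithmeticFunction.moebius d : ℝ) * (1 / ((d ^ 2 : ℕ) : ℝ)) = 6 / Real.pi ^ 2 := by
  have h := LSeries_one_mul_Lseries_moebius (s := 2) (by norm_num)
  rw [LSeries_one_eq_riemannZeta (by norm_num), riemannZeta_two] at h
  have hpi : (Real.pi : ℂ) ≠ 0 := by exact_mod_cast Real.pi_ne_zero
  have h2 : LSeries (fun n => (ArithmeticFunction.moebius n : ℂ)) 2 = 6 / (Real.pi : ℂ) ^ 2 := by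
    field_simp at h ⊢
    linear_combination h
  have h3 : ((∑' d : ℕ, (ArithmeticFunction.moebius d : ℝ) * (1 / ((d ^ 2 : ℕ) : ℝ)) : ℝ) : ℂ)
      = ((6 / Real.pi ^ 2 : ℝ) : ℂ) := by
    push_cast
    rw [← h2, LSeries]
    refine tsum_congr fun d => ?_
    rcases eq_or_ne d 0 with rfl | hd
    · simp
    · rw [LSeries.term_of_ne_zero hd, mul_one_div]
      norm_cast
  exact_mod_cast h3

lemma tendsto_squarefree_count :
    Tendsto (fun X : ℕ => (((Finset.Icc 1 X).filter Squarefree).card : ℝ) / X) atTop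
      (𝓝 (6 / Real.pi ^ 2)) := by
  rw [← tsum_moebius_div_sq]
  simp_rw [squarefree_count_eq_tsum, ← tsum_div_const, mul_div_assoc]
  refine tendsto_tsum_of_dominated_convergence (bound := fun d : ℕ => 1 / (d : ℝ) ^ 2)
    (Real.summable_one_div_nat_pow.mpr one_lt_two)
    (fun d => (tendsto_natDiv_div (d ^ 2)).const_mul _) (Eventually.of_forall fun X d => ?_)
  have h1 : |(ArithmeticFunction.moebius d : ℝ)| ≤ 1 := by
    exact_mod_cast ArithmeticFunction.abs_moebius_le_one
  have h2 : ((X / d ^ 2 : ℕ) : ℝ) / X ≤ 1 / (d : ℝ) ^ 2 := by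
    rcases Nat.eq_zero_or_pos X with rfl | hX
    · simp
    · have hX' : (0 : ℝ) < X := by exact_mod_cast hX
      rw [div_le_iff₀ hX', one_div_mul_eq_div]
      exact_mod_cast Nat.cast_div_le (α := ℝ) (m := X) (n := d ^ 2)
  rw [norm_mul, Real.norm_eq_abs, Real.norm_of_nonneg (by positivity)]
  calc _ ≤ 1 * (1 / (d : ℝ) ^ 2) := by gcongr
    _ = _ := one_mul _

/-! ### Adding one prime -/

/-- If `e(X) + e(⌊X / p⌋) = o(X)` with `p ≥ 2`, then `e(X) = o(X)`: iterating the relation sums a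
geometric series of ratio `1 / p ≤ 1 / 2`. -/
lemma tendsto_div_zero_of_add_comp_div {p : ℕ} (hp : 2 ≤ p) {e : ℕ → ℝ}
    (h : Tendsto (fun X : ℕ => (e X + e (X / p)) / X) atTop (𝓝 0)) :
    Tendsto (fun X : ℕ => e X / X) atTop (𝓝 0) := by
  have key : ∀ ε > 0, ∃ C : ℝ, ∀ X : ℕ, |e X| ≤ ε * X + C := by
    intro ε hε
    obtain ⟨N, hN⟩ := Metric.tendsto_atTop.mp h (ε / 2) (by positivity)
    refine ⟨∑ i ∈ Finset.range (N + 1), |e i|, fun X => ?_⟩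
    induction X using Nat.strong_induction_on with
    | _ X ih =>
    rcases lt_or_ge X (N + 1) with hX | hX
    · have := Finset.single_le_sum (f := fun i => |e i|) (fun i _ => abs_nonneg _)
        (Finset.mem_range.mpr hX)
      have h0 : 0 ≤ ε * X := by positivity
      linarith
    · have hX0 : 0 < X := by omega
      have hX' : (0 : ℝ) < X := by exact_mod_cast hX0
      have h1 := hN X (by omega)
      rw [Real.dist_eq, sub_zero, abs_div, abs_of_pos hX', div_lt_iff₀ hX'] at h1
      have h2 := ih (X / p) (Nat.div_lt_self hX0 (by omega))
      have h3 : ((X / p : ℕ) : ℝ) ≤ X / 2 := by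
        have h4 : X / p ≤ X / 2 := Nat.div_le_div_left hp two_pos
        calc ((X / p : ℕ) : ℝ) ≤ ((X / 2 : ℕ) : ℝ) := by exact_mod_cast h4
          _ ≤ X / 2 := by exact_mod_cast Nat.cast_div_le (α := ℝ) (m := X) (n := 2)
      have h5 : |e X| ≤ |e X + e (X / p)| + |e (X / p)| := by
        simpa using abs_sub (e X + e (X / p)) (e (X / p))
      have h6 := mul_le_mul_of_nonneg_left h3 hε.le
      linarith
  rw [Metric.tendsto_atTop]
  intro ε hε
  obtain ⟨C, hC⟩ := key (ε / 2) (by positivity)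
  obtain ⟨N, hN⟩ := exists_nat_gt (C / (ε / 2))
  refine ⟨N + 1, fun X hX => ?_⟩
  have hX' : (0 : ℝ) < X := by
    have : 0 < X := by omega
    exact_mod_cast this
  have hNX : (N : ℝ) ≤ X := by
    have : N ≤ X := by omega
    exact_mod_cast this
  rw [div_lt_iff₀ (by positivity)] at hN
  rw [Real.dist_eq, sub_zero, abs_div, abs_of_pos hX', div_lt_iff₀ hX']
  have h1 := hC X
  nlinarith

/-- The set of positive integers satisfying `R` has natural density `d`. -/
def HasNatDensity (R : ℕ → Prop) (d : ℝ) : Prop :=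
  open Classical in
  Tendsto (fun X : ℕ => (((Finset.Icc 1 X).filter R).card : ℝ) / X) atTop (𝓝 d)

lemma HasNatDensity.congr {R S : ℕ → Prop} {d : ℝ} (h : HasNatDensity R d)
    (hRS : ∀ n, R n ↔ S n) : HasNatDensity S d := by
  rwa [← (funext fun n => propext (hRS n) : R = S)]

open Classical in
lemma card_filter_dvd_eq {R : ℕ → Prop} {p : ℕ} (hp : 0 < p)
    (hR : ∀ m, R (p * m) ↔ R m ∧ ¬ p ∣ m) (X : ℕ) :
    ((Finset.Icc 1 X).filter fun n => R n ∧ p ∣ n).card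
      = ((Finset.Icc 1 (X / p)).filter fun n => R n ∧ ¬ p ∣ n).card := by
  symm
  refine Finset.card_bij (fun m _ => p * m) ?_ ?_ ?_
  · intro m hm
    simp only [Finset.mem_filter, Finset.mem_Icc, Nat.le_div_iff_mul_le hp] at hm ⊢
    refine ⟨⟨Nat.mul_pos hp hm.1.1, ?_⟩, (hR m).mpr hm.2, dvd_mul_right p m⟩
    rw [mul_comm]
    exact hm.1.2
  · intro a _ b _ hab
    exact Nat.eq_of_mul_eq_mul_left hp hab
  · rintro n hn
    simp only [Finset.mem_filter, Finset.mem_Icc] at hn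
    obtain ⟨⟨h1, h2⟩, h3, m, rfl⟩ := hn
    refine ⟨m, ?_, rfl⟩
    simp only [Finset.mem_filter, Finset.mem_Icc, Nat.le_div_iff_mul_le hp]
    refine ⟨⟨Nat.pos_of_mul_pos_left h1, ?_⟩, (hR m).mp h3⟩
    rw [mul_comm]
    exact h2

/-- The densities of the two parts of `R` cut out by divisibility by `p`. The hypothesis `hR`
says that `p * m` satisfies `R` exactly when `m` satisfies `R` and `p` does not divide `m`. -/
lemma HasNatDensity.split {R : ℕ → Prop} {d : ℝ} {p : ℕ} (hp : 2 ≤ p)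
    (hR : ∀ m, R (p * m) ↔ R m ∧ ¬ p ∣ m) (h : HasNatDensity R d) :
    HasNatDensity (fun n => R n ∧ ¬ p ∣ n) (d * (p / (p + 1))) ∧
      HasNatDensity (fun n => R n ∧ p ∣ n) (d * (1 / (p + 1))) := by
  classical
  set f : ℕ → ℝ := fun X => (((Finset.Icc 1 X).filter fun n => R n ∧ ¬ p ∣ n).card : ℝ) with hf
  have hp0 : (p : ℝ) ≠ 0 := by
    have : p ≠ 0 := by omega
    exact_mod_cast this
  have hp1 : (p : ℝ) + 1 ≠ 0 := by positivity
  have hsum : ∀ X : ℕ, (((Finset.Icc 1 X).filter R).card : ℝ) = f X + f (X / p) := by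
    intro X
    simp only [hf]
    rw [← card_filter_dvd_eq (by omega) hR X, add_comm]
    norm_cast
    rw [← Finset.filter_filter, ← Finset.filter_filter,
      Finset.card_filter_add_card_filter_not]
  have hF : Tendsto (fun X : ℕ => (f X + f (X / p)) / X) atTop (𝓝 d) := by
    unfold HasNatDensity at h
    refine Tendsto.congr (fun X => ?_) h
    rw [← hsum]
  set c : ℝ := d * (p / (p + 1)) with hc
  have he : Tendsto (fun X : ℕ => ((f X - c * X) + (f (X / p) - c * ((X / p : ℕ) : ℝ))) / X)
      atTop (𝓝 0) := by
    have h1 := (hF.sub (tendsto_const_nhds (x := c))).sub ((tendsto_natDiv_div p).const_mul c)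
    have h2 : d - c - c * (1 / p) = 0 := by
      rw [hc]
      field_simp
      ring
    rw [h2] at h1
    refine h1.congr' ?_
    filter_upwards [eventually_gt_atTop 0] with X hX
    have hX' : (X : ℝ) ≠ 0 := by
      have : X ≠ 0 := by omega
      exact_mod_cast this
    field_simp
    ring
  have hfc : Tendsto (fun X : ℕ => f X / X) atTop (𝓝 c) := by
    have h1 := (tendsto_div_zero_of_add_comp_div hp (e := fun X => f X - c * X) he).add_const c
    rw [zero_add] at h1
    refine h1.congr' ?_
    filter_upwards [eventually_gt_atTop 0] with X hX
    have hX' : (X : ℝ) ≠ 0 := by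
      have : X ≠ 0 := by omega
      exact_mod_cast this
    field_simp
    ring
  refine ⟨by
    unfold HasNatDensity
    convert hfc, ?_⟩
  have h1 := hF.sub hfc
  have h2 : d - c = d * (1 / (p + 1)) := by
    rw [hc]
    field_simp
    ring
  rw [h2] at h1
  unfold HasNatDensity
  refine h1.congr fun X => ?_
  rw [← sub_div, add_sub_cancel_left]
  simp only [hf]
  congr 2
  convert (card_filter_dvd_eq (by omega) hR X).symm

/-! ### Induction on the constraints -/

/-- Membership in `A(P, Q)`: squarefree, divisible by all of `P` and by none of `Q`. -/
def Constrained (P Q : Finset ℕ) (n : ℕ) : Prop :=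
  Squarefree n ∧ (∀ p ∈ P, p ∣ n) ∧ (∀ q ∈ Q, ¬ q ∣ n)

lemma constrained_prime_mul_iff {P Q : Finset ℕ} (hP : ∀ p ∈ P, p.Prime) (hQ : ∀ q ∈ Q, q.Prime)
    {r : ℕ} (hr : r.Prime) (hrP : r ∉ P) (hrQ : r ∉ Q) (m : ℕ) :
    Constrained P Q (r * m) ↔ Constrained P Q m ∧ ¬ r ∣ m := by
  have hdvd : ∀ s : ℕ, s.Prime → s ≠ r → (s ∣ r * m ↔ s ∣ m) := fun s hs hsr =>
    Nat.Coprime.dvd_mul_left ((Nat.coprime_primes hs hr).mpr hsr)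
  have h1 : (∀ p ∈ P, p ∣ r * m) ↔ ∀ p ∈ P, p ∣ m :=
    forall₂_congr fun p hp => hdvd p (hP p hp) (fun h => hrP (h ▸ hp))
  have h2 : (∀ q ∈ Q, ¬ q ∣ r * m) ↔ ∀ q ∈ Q, ¬ q ∣ m :=
    forall₂_congr fun q hq => not_congr (hdvd q (hQ q hq) (fun h => hrQ (h ▸ hq)))
  have h3 : Squarefree (r * m) ↔ Squarefree m ∧ ¬ r ∣ m := by
    rw [Nat.squarefree_mul_iff, hr.coprime_iff_not_dvd]
    have := hr.prime.squarefree
    tauto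
  unfold Constrained
  rw [h1, h2, h3]
  tauto

lemma hasNatDensity_constrained_empty (Q : Finset ℕ) (hQ : ∀ q ∈ Q, q.Prime) :
    HasNatDensity (Constrained ∅ Q) ((∏ q ∈ Q, (q : ℝ) / (q + 1)) * (6 / Real.pi ^ 2)) := by
  classical
  induction Q using Finset.induction_on with
  | empty =>
    have h : HasNatDensity Squarefree (6 / Real.pi ^ 2) := by
      unfold HasNatDensity
      convert tendsto_squarefree_count
    simpa using h.congr (S := Constrained ∅ ∅) fun n => by simp [Constrained]
  | insert r Q hr ih =>
    have hQ' : ∀ q ∈ Q, q.Prime := fun q hq => hQ q (Finset.mem_insert_of_mem hq)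
    have hrp := hQ r (Finset.mem_insert_self r Q)
    have h := ((ih hQ').split hrp.two_le (constrained_prime_mul_iff (by simp) hQ' hrp
      (by simp) hr)).1
    rw [Finset.prod_insert hr, mul_assoc, mul_comm]
    refine h.congr fun n => ?_
    simp only [Constrained, Finset.forall_mem_insert]
    tauto

lemma hasNatDensity_constrained (P Q : Finset ℕ) (hP : ∀ p ∈ P, p.Prime)
    (hQ : ∀ q ∈ Q, q.Prime) (hPQ : Disjoint P Q) :
    HasNatDensity (Constrained P Q)
      ((∏ p ∈ P, (1 : ℝ) / (p + 1)) * (∏ q ∈ Q, (q : ℝ) / (q + 1)) * (6 / Real.pi ^ 2)) := by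
  classical
  induction P using Finset.induction_on with
  | empty => simpa using hasNatDensity_constrained_empty Q hQ
  | insert r P hr ih =>
    have hP' : ∀ p ∈ P, p.Prime := fun p hp => hP p (Finset.mem_insert_of_mem hp)
    have hrp := hP r (Finset.mem_insert_self r P)
    rw [Finset.disjoint_insert_left] at hPQ
    have h := ((ih hP' hPQ.2).split hrp.two_le (constrained_prime_mul_iff hP' hQ hrp hr hPQ.1)).2
    rw [Finset.prod_insert hr, mul_assoc, mul_assoc, mul_comm, ← mul_assoc]
    refine h.congr fun n => ?_
    simp only [Constrained, Finset.forall_mem_insert]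
    tauto

/-- Let `P` and `Q` be two disjoint finite sets of primes. The natural density of the set of
squarefree positive integers divisible by every prime in `P` and by no prime in `Q` equals
`(∏_{p ∈ P} 1/(p+1)) · (∏_{q ∈ Q} q/(q+1)) · (6/π²)`. -/
theorem squarefree_with_divisibility_constraints_density
    (P Q : Finset ℕ) (hP : ∀ p ∈ P, p.Prime) (hQ : ∀ q ∈ Q, q.Prime)
    (hPQ : Disjoint P Q) :
    Filter.Tendsto
      (fun X : ℕ =>
        (((Finset.Icc 1 X).filter fun n =>
            Squarefree n ∧ (∀ p ∈ P, p ∣ n) ∧ (∀ q ∈ Q, ¬ q ∣ n)).card : ℝ) / X)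
      Filter.atTop
      (nhds ((∏ p ∈ P, (1 : ℝ) / (p + 1)) * (∏ q ∈ Q, (q : ℝ) / (q + 1))
        * (6 / Real.pi ^ 2))) := by
  have h := hasNatDensity_constrained P Q hP hQ hPQ
  unfold HasNatDensity Constrained at h
  convert h
end
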